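/- Let K be a field, σ an automorphism of K, R = K[t;σ] the twisted polynomial ring with multiplication ta = σ(a)t, and f(t) = t^m − Σ_{i=0}^{m−1} a_i t^i ∈ R a monic polynomial of degree m ≥ 2 that is not right invariant. Then an element d ∈ K lies in the right nucleus of the Petit algebra S_f = R/Rf if and only if σ^m(d) a_i = a_i σ^i(d) for all i = 0, 1, …, m−1. -/

import Mathlib

open Polynomial

/-- Skew (twisted) multiplication on polynomials over `K`, representing the
multiplication of the twisted polynomial ring `K[t;σ]` with `t·a = σ(a)·t`:
`(a t^i)·(b t^j) = a σ^i(b) t^{i+j}`. -/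
noncomputable def sMul {K : Type} [Field K] (σ : K ≃+* K) (p q : K[X]) : K[X] :=
  p.sum fun i a => C a * (q.map ((σ ^ i : K ≃+* K) : K →+* K)) * X ^ i

/-- `f` is right invariant in `K[t;σ]`: `f·g ∈ R·f` for all `g`. -/
def RightInvariant {K : Type} [Field K] (σ : K ≃+* K) (f : K[X]) : Prop :=
  ∀ g : K[X], ∃ q : K[X], sMul σ f g = sMul σ q f

/-- Membership in the eigenring of `f`, i.e. the right nucleus of the Petit
algebra `S_f = K[t;σ]/K[t;σ]f` (for `f` not right invariant):
`{g | deg g < deg f ∧ f·g ∈ R·f}`. -/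
def InEigenring {K : Type} [Field K] (σ : K ≃+* K) (f g : K[X]) : Prop :=
  g.degree < f.degree ∧ ∃ q : K[X], sMul σ f g = sMul σ q f

/-- Remainder of right division by `f` in `K[t;σ]` (Petit multiplication in
`S_f` is `g ∘ h = (g·h) mod_r f`). -/
noncomputable def modRight {K : Type} [Field K] (σ : K ≃+* K) (f g : K[X]) : K[X] := by
  classical
  exact if h : ∃ r : K[X], r.degree < f.degree ∧ ∃ q : K[X], g = sMul σ q f + r
    then h.choose else 0

theorem sMul_C_left {K : Type} [Field K] (σ : K ≃+* K) (c : K) (q : K[X]) :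
    sMul σ (C c) q = C c * q := by
  have h : (((σ ^ 0 : K ≃+* K)) : K →+* K) = RingHom.id K := by ext; simp
  rw [sMul, sum_C_index, h, Polynomial.map_id, pow_zero, mul_one]
  simp

theorem coeff_sMul_C {K : Type} [Field K] (σ : K ≃+* K) (p : K[X]) (d : K) (n : ℕ) :
    (sMul σ p (C d)).coeff n = p.coeff n * (σ ^ n) d := by
  simp only [sMul, sum_def, finsetSum_coeff, map_C, ← C_mul, coeff_C_mul_X_pow]
  rw [Finset.sum_ite_eq]
  split_ifs with h
  · rfl
  · rw [notMem_support_iff.mp h, zero_mul]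

theorem coeff_sMul_natDegree_add_natDegree {K : Type} [Field K] (σ : K ≃+* K) (p q : K[X]) :
    (sMul σ p q).coeff (p.natDegree + q.natDegree) =
      p.leadingCoeff * (σ ^ p.natDegree) q.leadingCoeff := by
  simp only [sMul, sum_def, finsetSum_coeff, mul_assoc, coeff_C_mul]
  rw [Finset.sum_eq_single p.natDegree]
  · rw [add_comm, coeff_mul_X_pow, coeff_map]
    rfl
  · intro i hi hne
    have hlt : i < p.natDegree := lt_of_le_of_ne (le_natDegree_of_mem_supp i hi) hne
    rw [coeff_mul_X_pow', if_pos (by omega), coeff_map,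
      coeff_eq_zero_of_natDegree_lt (p := q) (by omega), map_zero, mul_zero]
  · intro h
    rw [notMem_support_iff.mp h, zero_mul]

/-- If `f * d` is a left multiple of a monic nonconstant `f`, then the quotient is a constant,
so being in the eigenring can be read off the coefficients of `f`. -/
theorem inEigenring_C_iff {K : Type} [Field K] (σ : K ≃+* K) {f : K[X]} (hf : f.Monic)
    (hdeg : 0 < f.natDegree) (d : K) :
    InEigenring σ f (C d) ↔
      ∀ n, f.coeff n * (σ ^ n) d = (σ ^ f.natDegree) d * f.coeff n := by
  constructor
  · rintro ⟨-, q, hq⟩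
    have hq0 : q.natDegree = 0 := by
      by_contra hne
      have h := coeff_sMul_natDegree_add_natDegree σ q f
      rw [← hq, coeff_sMul_C, coeff_eq_zero_of_natDegree_lt (by omega), zero_mul,
        hf.leadingCoeff, map_one, mul_one] at h
      exact hne (by rw [leadingCoeff_eq_zero.mp h.symm, natDegree_zero])
    rw [eq_C_of_natDegree_eq_zero hq0, sMul_C_left] at hq
    have key (n : ℕ) : f.coeff n * (σ ^ n) d = q.coeff 0 * f.coeff n := by
      rw [← coeff_sMul_C, hq, coeff_C_mul]
    have hc := key f.natDegree
    rw [hf.coeff_natDegree, one_mul, mul_one] at hc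
    simpa only [hc] using key
  · intro h
    refine ⟨degree_C_le.trans_lt (natDegree_pos_iff_degree_pos.mp hdeg),
      C ((σ ^ f.natDegree) d), ?_⟩
    ext n
    rw [coeff_sMul_C, sMul_C_left, coeff_C_mul, h n]

/-- Theorem 2.2: let `f(t) = t^m - Σ_{i<m} a_i t^i ∈ K[t;σ]` be monic of degree
`m ≥ 2` and not right invariant. Then `d ∈ K` lies in the right nucleus of the Petit
algebra `S_f` if and only if `σ^m(d) a_i = a_i σ^i(d)` for all `i < m`. -/
theorem mem_rightNucleus_iff {K : Type} [Field K] (σ : K ≃+* K) (m : ℕ) (hm : 2 ≤ m)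
    (a : ℕ → K) (f : K[X]) (hf : f = X ^ m - ∑ i ∈ Finset.range m, C (a i) * X ^ i)
    (hri : ¬ RightInvariant σ f) (d : K) :
    InEigenring σ f (C d) ↔ ∀ i < m, (σ ^ m) d * a i = a i * (σ ^ i) d := by
  have hcoeff (n : ℕ) :
      f.coeff n = (if n = m then 1 else 0) - if n < m then a n else 0 := by
    simp [hf, coeff_X_pow]
  have hfm : f.coeff m = 1 := by simp [hcoeff]
  have hfgt (n : ℕ) (hn : m < n) : f.coeff n = 0 := by
    rw [hcoeff, if_neg (by omega), if_neg (by omega), sub_zero]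
  have hflt (n : ℕ) (hn : n < m) : f.coeff n = -a n := by
    rw [hcoeff, if_neg (by omega), if_pos hn, zero_sub]
  have hdeg : f.natDegree = m :=
    natDegree_eq_of_le_of_coeff_ne_zero (natDegree_le_iff_coeff_eq_zero.mpr hfgt) (by simp [hfm])
  have hmonic : f.Monic := by rw [Monic, leadingCoeff, hdeg, hfm]
  rw [inEigenring_C_iff σ hmonic (by omega), hdeg]
  constructor
  · intro h i hi
    have h := h i
    rw [hflt i hi, neg_mul, mul_neg, neg_inj] at h
    exact h.symm
  · intro h n
    rcases lt_trichotomy n m with hn | rfl | hn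
    · rw [hflt n hn, neg_mul, mul_neg, h n hn]
    · exact mul_comm _ _
    · rw [hfgt n hn, zero_mul, mul_zero]
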